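/- arXiv:2007.12987 — 7 statements merged into one kernel-verified Lean document; each statement's English description precedes it below -/
import Mathlib

section
/- Let A be a countable set, let ε ≥ 0, and let μ1, μ2 be probability distributions on A. Then Δ_ε(μ1, μ2) ≤ 0 if and only if μ1 and μ2 are related by the ε-approximate lifting of the equality relation on A, i.e. μ1 (=)^ε μ2. -/
open scoped BigOperators

noncomputable section

/-- Mass that a (sub)distribution assigns to a set of outcomes. -/
def mass {A : Type*} (μ : A → ℝ) (E : Set A) : ℝ := ∑' a : E, μ a

/-- The ε-divergence `Δ_ε(μ1, μ2) = sup_{E ⊆ A} (μ1(E) − exp(ε)·μ2(E))`. -/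
def eDiv {A : Type*} (ε : ℝ) (μ1 μ2 : A → ℝ) : ℝ :=
  ⨆ E : Set A, (mass μ1 E - Real.exp ε * mass μ2 E)

/-- `μ` is a probability distribution: pointwise nonnegative with total mass 1. -/
def IsProb {A : Type*} (μ : A → ℝ) : Prop :=
  (∀ a, 0 ≤ μ a) ∧ (∑' a, μ a) = 1

/-- `μ` is a subdistribution: pointwise nonnegative, summable, with total mass at most 1. -/
def IsSubProb {A : Type*} (μ : A → ℝ) : Prop :=
  (∀ a, 0 ≤ μ a) ∧ Summable μ ∧ (∑' a, μ a) ≤ 1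

/-- ε-approximate lifting `μ1 (Ψ)^ε μ2` of a relation `Ψ` between two
probability distributions. -/
def Lifting {A B : Type*} (ε : ℝ) (Ψ : A → B → Prop) (μ1 : A → ℝ) (μ2 : B → ℝ) : Prop :=
  ∃ μL μR : A × B → ℝ, IsProb μL ∧ IsProb μR ∧
    (∀ a, (∑' b, μL (a, b)) = μ1 a) ∧
    (∀ b, (∑' a, μR (a, b)) = μ2 b) ∧
    (∀ p : A × B, (0 < μL p ∨ 0 < μR p) → Ψ p.1 p.2) ∧
    eDiv ε μL μR ≤ 0

/-- `A` is ε-differentially private w.r.t. the adjacency relation `adj`. -/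
def DP {D O : Type*} (ε : ℝ) (adj : D → D → Prop) (A : D → O → ℝ) : Prop :=
  ∀ d1 d2, adj d1 d2 → ∀ o, A d1 o ≤ Real.exp ε * A d2 o

/-- Monadic bind of distributions: `(bind μ f)(b) = Σ_a μ(a)·f(a)(b)`. -/
def pbind {A B : Type*} (μ : A → ℝ) (f : A → B → ℝ) : B → ℝ :=
  fun b => ∑' a, μ a * f a b

/-- Dirac (point-mass) distribution at `a`. -/
def punit {A : Type*} [DecidableEq A] (a : A) : A → ℝ :=
  fun x => if x = a then 1 else 0

/-- Pushforward of a distribution along `g`: `(map g μ)(b) = Σ_{a : g(a)=b} μ(a)`. -/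
def pmap {A B : Type*} (g : A → B) (μ : A → ℝ) : B → ℝ :=
  fun b => ∑' a : {a // g a = b}, μ (a : A)

/-- Discrete Laplace distribution with mean `v` and (inverse scale) parameter `ε`:
`dLap(v, ε)(z) = ((exp ε − 1)/(exp ε + 1))·exp(−ε·|z − v|)`. -/
def dLap (v : ℤ) (ε : ℝ) : ℤ → ℝ :=
  fun z => ((Real.exp ε - 1) / (Real.exp ε + 1)) * Real.exp (-ε * ((|z - v| : ℤ) : ℝ))

end

theorem IsProb.summable' {A : Type*} {μ : A → ℝ} (h : IsProb μ) : Summable μ := by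
  by_contra hn
  have := h.2
  rw [tsum_eq_zero_of_not_summable hn] at this
  exact zero_ne_one this

theorem mass_le_one' {A : Type*} {μ : A → ℝ} (h : IsProb μ) (E : Set A) : mass μ E ≤ 1 := by
  rw [← h.2]
  exact h.summable'.tsum_subtype_le μ E h.1

theorem eDiv_le_zero_iff' {A : Type*} (ε : ℝ) {μ1 μ2 : A → ℝ} (h1 : IsProb μ1) (h2 : IsProb μ2) :
    eDiv ε μ1 μ2 ≤ 0 ↔ ∀ a, μ1 a ≤ Real.exp ε * μ2 a := by
  constructor
  · intro h a
    have hb : BddAbove (Set.range fun E : Set A => mass μ1 E - Real.exp ε * mass μ2 E) := by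
      refine ⟨1, ?_⟩
      rintro _ ⟨E, rfl⟩
      have e1 := mass_le_one' h1 E
      have e2 : 0 ≤ mass μ2 E := tsum_nonneg fun a => h2.1 a
      have e3 := mul_nonneg (Real.exp_pos ε).le e2
      show mass μ1 E - Real.exp ε * mass μ2 E ≤ 1
      linarith
    have h' := (le_ciSup hb {a}).trans h
    have k : ∀ μ : A → ℝ, mass μ {a} = μ a := fun μ => by
      unfold mass
      exact tsum_singleton a μ
    simp only [k] at h'
    linarith
  · intro h
    refine ciSup_le fun E => ?_
    have s1 : Summable fun a : E => μ1 a := h1.summable'.subtype E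
    have s2 : Summable fun a : E => μ2 a := h2.summable'.subtype E
    have : mass μ1 E ≤ Real.exp ε * mass μ2 E := by
      unfold mass
      rw [← tsum_mul_left]
      exact s1.tsum_le_tsum (fun a => h a) (s2.mul_left _)
    linarith

open Classical in
theorem isProb_diag' {A : Type*} {μ : A → ℝ} (h : IsProb μ) :
    IsProb (fun p : A × A => if p.1 = p.2 then μ p.1 else 0) := by
  refine ⟨fun p => ?_, ?_⟩
  · show 0 ≤ if p.1 = p.2 then μ p.1 else 0
    split_ifs
    · exact h.1 _
    · exact le_rfl
  · rw [← h.2]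
    have hi : Function.Injective (fun a : A => (a, a)) := fun a b hab => congrArg Prod.fst hab
    rw [← hi.tsum_eq]
    · simp
    · rintro ⟨a, b⟩ hp
      by_cases hab : a = b
      · exact ⟨a, by simp [hab]⟩
      · simp [hab] at hp

/-- Fundamental property of liftings: for probability distributions `μ1, μ2` on a
countable set `A` and `ε ≥ 0`, `Δ_ε(μ1, μ2) ≤ 0` iff `μ1 (=)^ε μ2`. -/
theorem fundamental_property_of_liftings {A : Type*} [Countable A] (ε : ℝ) (hε : 0 ≤ ε)
    (μ1 μ2 : A → ℝ) (h1 : IsProb μ1) (h2 : IsProb μ2) :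
    eDiv ε μ1 μ2 ≤ 0 ↔ Lifting ε (fun a b => a = b) μ1 μ2 := by
  classical
  rw [eDiv_le_zero_iff' ε h1 h2]
  constructor
  · intro h
    refine ⟨fun p => if p.1 = p.2 then μ1 p.1 else 0, fun p => if p.1 = p.2 then μ2 p.1 else 0,
      ?_, ?_, ?_, ?_, ?_, ?_⟩
    · convert isProb_diag' h1
    · convert isProb_diag' h2
    · intro a
      rw [tsum_eq_single a]
      · simp
      · intro b hb
        simp [Ne.symm hb]
    · intro b
      rw [tsum_eq_single b]
      · simp
      · intro a ha
        simp [ha]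
    · intro p hp
      by_contra hne
      simp [hne] at hp
    · rw [eDiv_le_zero_iff' ε (by convert isProb_diag' h1) (by convert isProb_diag' h2)]
      rintro ⟨a, b⟩
      by_cases hab : a = b
      · simpa [hab] using h b
      · simp [hab]
  · rintro ⟨μL, μR, hL, hR, m1, m2, hs, hd⟩ a
    rw [eDiv_le_zero_iff' ε hL hR] at hd
    have zL : ∀ x y, x ≠ y → μL (x, y) = 0 := fun x y hxy =>
      le_antisymm (not_lt.1 fun hlt => hxy (hs (x, y) (Or.inl hlt))) (hL.1 _)
    have zR : ∀ x y, x ≠ y → μR (x, y) = 0 := fun x y hxy =>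
      le_antisymm (not_lt.1 fun hlt => hxy (hs (x, y) (Or.inr hlt))) (hR.1 _)
    rw [← m1 a, ← m2 a, tsum_eq_single a (fun b hb => zL a b hb.symm),
      tsum_eq_single a (fun b hb => zR b a hb)]
    exact hd (a, a)
end

section
/- (Laplace mechanism.) Let ε > 0, let ∼ be an adjacency relation on D, and let f : D → ℤ be a k-sensitive function with respect to ∼. Then the randomized algorithm mapping d to f(d) + ν, where ν is sampled from the discrete Laplace distribution dLap(0, ε), is kε-differentially private with respect to ∼. -/
open scoped BigOperators

/-- The Laplace mechanism: adding discrete Laplace noise `dLap(0, ε)` to a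
`k`-sensitive integer query is `k·ε`-differentially private. -/
theorem laplace_mechanism_dp {D : Type*} (ε : ℝ) (hε : 0 < ε) (adj : D → D → Prop)
    (k : ℤ) (f : D → ℤ) (hsens : ∀ x y, adj x y → |f x - f y| ≤ k) :
    DP ((k : ℝ) * ε) adj (fun d => pbind (dLap 0 ε) (fun ν => punit (f d + ν))) := by
  have key : ∀ d o, pbind (dLap 0 ε) (fun ν => punit (f d + ν)) o = dLap 0 ε (o - f d) := by
    intro d o
    unfold pbind punit
    rw [tsum_eq_single (o - f d)]
    · simp
    · intro b hb
      have h : o ≠ f d + b := by omega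
      simp [h]
  intro d1 d2 h o
  simp only [key]
  have h1 := hsens d1 d2 h
  have h2 : |o - f d2| ≤ |o - f d1| + k := by
    have := abs_add_le (o - f d1) (f d1 - f d2)
    have e : o - f d1 + (f d1 - f d2) = o - f d2 := by ring
    rw [e] at this
    linarith
  have h3 : ((|o - f d2| : ℤ) : ℝ) ≤ ((|o - f d1| : ℤ) : ℝ) + (k : ℝ) := by exact_mod_cast h2
  have hc : 0 ≤ (Real.exp ε - 1) / (Real.exp ε + 1) := by
    have : 1 ≤ Real.exp ε := Real.one_le_exp hε.le
    exact div_nonneg (by linarith) (by linarith)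
  unfold dLap
  rw [mul_left_comm, ← Real.exp_add]
  refine mul_le_mul_of_nonneg_left (Real.exp_le_exp.mpr ?_) hc
  rw [sub_zero, sub_zero]
  nlinarith
end

section
/- (Shift coupling for the Laplace distribution.) Let ε > 0 and v1, v2, k ∈ ℤ. Let μ1 = dLap(v1, ε) and μ2 = dLap(v2, ε) be discrete Laplace distributions on ℤ with the same scale parameter ε. Then μ1 and μ2 are related by the (|k + v1 − v2|·ε)-approximate lifting of the relation {(z1, z2) ∈ ℤ × ℤ | z1 + k = z2}. -/
open scoped BigOperators

theorem aux_hasSum_zero (ε : ℝ) (hε : 0 < ε) : HasSum (dLap 0 ε) 1 := by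
  have hr0 : 0 ≤ Real.exp (-ε) := (Real.exp_pos _).le
  have hr1 : Real.exp (-ε) < 1 := by
    rw [Real.exp_lt_one_iff]
    linarith
  have hg := hasSum_geometric_of_lt_one hr0 hr1
  set c := (Real.exp ε - 1) / (Real.exp ε + 1) with hc
  have h1 : HasSum (fun n : ℕ => dLap 0 ε (n : ℤ)) (c * (1 - Real.exp (-ε))⁻¹) := by
    refine (hg.mul_left c).congr_fun ?_
    intro n
    simp only [dLap, ← hc, ← Real.exp_nat_mul]
    congr 2
    rw [sub_zero, abs_of_nonneg (by positivity)]
    push_cast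
    ring
  have h2 : HasSum (fun n : ℕ => dLap 0 ε (-((n : ℤ) + 1)))
      (c * Real.exp (-ε) * (1 - Real.exp (-ε))⁻¹) := by
    refine (hg.mul_left (c * Real.exp (-ε))).congr_fun ?_
    intro n
    simp only [dLap, ← hc, ← Real.exp_nat_mul]
    rw [mul_assoc, ← Real.exp_add]
    congr 2
    rw [sub_zero, abs_neg, abs_of_nonneg (by positivity)]
    push_cast
    ring
  have h3 := HasSum.of_nat_of_neg_add_one h1 h2
  convert h3 using 1
  have he : 1 < Real.exp ε := Real.one_lt_exp_iff.2 hε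
  rw [hc, Real.exp_neg]
  have a : Real.exp ε - 1 ≠ 0 := by linarith
  have b : Real.exp ε + 1 ≠ 0 := by linarith
  have d : Real.exp ε ≠ 0 := by linarith
  have e : 1 - (Real.exp ε)⁻¹ = (Real.exp ε - 1) / Real.exp ε := by field_simp
  rw [e]
  field_simp

theorem aux_hasSum (v : ℤ) (ε : ℝ) (hε : 0 < ε) : HasSum (dLap v ε) 1 := by
  have h := (Equiv.subRight v).hasSum_iff.2 (aux_hasSum_zero ε hε)
  refine h.congr_fun ?_
  intro z
  simp [dLap]

theorem aux_nonneg (v : ℤ) (ε : ℝ) (hε : 0 < ε) (z : ℤ) : 0 ≤ dLap v ε z := by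
  have he : 1 < Real.exp ε := Real.one_lt_exp_iff.2 hε
  unfold dLap
  have : 0 ≤ Real.exp ε - 1 := by linarith
  positivity

theorem aux_graph (k : ℤ) (f : ℤ → ℝ) (hf : HasSum f 1) :
    HasSum (fun p : ℤ × ℤ => if p.1 + k = p.2 then f p.1 else 0) 1 := by
  have hi : Function.Injective (fun z : ℤ => (z, z + k)) := fun a b h => (Prod.ext_iff.1 h).1
  rw [← hi.hasSum_iff]
  · refine hf.congr_fun ?_
    intro z
    simp
  · rintro ⟨a, b⟩ h
    refine if_neg ?_
    intro hab
    exact h ⟨a, by simpa using hab⟩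

theorem aux_le (ε : ℝ) (hε : 0 < ε) (v1 v2 k z : ℤ) :
    dLap v1 ε z ≤ Real.exp (((|k + v1 - v2| : ℤ) : ℝ) * ε) * dLap v2 ε (z + k) := by
  have he : 1 < Real.exp ε := Real.one_lt_exp_iff.2 hε
  unfold dLap
  rw [mul_left_comm, ← Real.exp_add]
  refine mul_le_mul_of_nonneg_left ?_ (div_nonneg (by linarith) (by linarith))
  rw [Real.exp_le_exp]
  have h : |z + k - v2| ≤ |k + v1 - v2| + |z - v1| := by
    have := abs_add_le (k + v1 - v2) (z - v1)
    rwa [show k + v1 - v2 + (z - v1) = z + k - v2 by ring] at this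
  have h' : ((|z + k - v2| : ℤ) : ℝ) ≤ ((|k + v1 - v2| : ℤ) : ℝ) + ((|z - v1| : ℤ) : ℝ) := by
    exact_mod_cast h
  nlinarith

/-- Shift coupling for the discrete Laplace distribution:
`dLap(v1, ε)` and `dLap(v2, ε)` are related by the `|k + v1 − v2|·ε`-approximate
lifting of the relation `{(z1, z2) | z1 + k = z2}`. -/
theorem laplace_shift_coupling (ε : ℝ) (hε : 0 < ε) (v1 v2 k : ℤ) :
    Lifting (((|k + v1 - v2| : ℤ) : ℝ) * ε) (fun z1 z2 => z1 + k = z2)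
      (dLap v1 ε) (dLap v2 ε) := by
  have hL := aux_graph k _ (aux_hasSum v1 ε hε)
  have hs : HasSum (fun z => dLap v2 ε (z + k)) 1 :=
    (Equiv.addRight k).hasSum_iff.2 (aux_hasSum v2 ε hε)
  have hR := aux_graph k _ hs
  refine ⟨_, _, ⟨?_, hL.tsum_eq⟩, ⟨?_, hR.tsum_eq⟩, ?_, ?_, ?_, ?_⟩
  · intro p
    split_ifs
    · exact aux_nonneg _ _ hε _
    · exact le_rfl
  · intro p
    split_ifs
    · exact aux_nonneg _ _ hε _
    · exact le_rfl
  · intro a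
    rw [tsum_eq_single (a + k)]
    · simp
    · intro b hb
      exact if_neg (Ne.symm hb)
  · intro b
    rw [tsum_eq_single (b - k)]
    · simp
    · intro a ha
      refine if_neg ?_
      intro h
      apply ha
      dsimp only at h
      omega
  · intro p hp
    by_contra hn
    simp [hn] at hp
  · refine ciSup_le ?_
    intro E
    unfold mass
    rw [sub_nonpos, ← tsum_mul_left]
    refine Summable.tsum_le_tsum ?_ (hL.summable.subtype E) ((hR.summable.subtype E).mul_left _)
    rintro ⟨p, hp⟩
    dsimp only
    split_ifs
    · exact aux_le ε hε v1 v2 k p.1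
    · simp
end

section
/- (Pointwise ratio bound for the discrete Laplace distribution.) Let ε > 0 and v1, v2 ∈ ℤ. Then for every z ∈ ℤ, dLap(v1, ε)(z) ≤ exp(ε·|v1 − v2|) · dLap(v2, ε)(z). -/
open scoped BigOperators

/-- Pointwise ratio bound for the discrete Laplace distribution. -/
theorem dLap_ratio_bound (ε : ℝ) (hε : 0 < ε) (v1 v2 : ℤ) (z : ℤ) :
    dLap v1 ε z ≤ Real.exp (ε * ((|v1 - v2| : ℤ) : ℝ)) * dLap v2 ε z := by
  have h : |z - v2| ≤ |v1 - v2| + |z - v1| := by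
    have := abs_sub_le z v1 v2
    linarith
  have h' : ((|z - v2| : ℤ) : ℝ) ≤ ((|v1 - v2| : ℤ) : ℝ) + ((|z - v1| : ℤ) : ℝ) := by
    exact_mod_cast h
  have hc : 0 ≤ (Real.exp ε - 1) / (Real.exp ε + 1) := by
    have := Real.one_lt_exp_iff.mpr hε
    exact div_nonneg (by linarith) (by linarith)
  unfold dLap
  rw [mul_left_comm, ← Real.exp_add]
  refine mul_le_mul_of_nonneg_left (Real.exp_le_exp.mpr ?_) hc
  nlinarith [mul_le_mul_of_nonneg_left h' hε.le]
end

section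
/- (Normalization of the discrete Laplace distribution.) For every ε > 0 and v ∈ ℤ, the function z ↦ ((exp ε − 1)/(exp ε + 1))·exp(−ε·|z − v|) on ℤ is a probability mass function, i.e. Σ_{z ∈ ℤ} ((exp ε − 1)/(exp ε + 1))·exp(−ε·|z − v|) = 1. -/
open scoped BigOperators

/-- The discrete Laplace density is a probability mass function:
`Σ_{z ∈ ℤ} ((exp ε − 1)/(exp ε + 1))·exp(−ε·|z − v|) = 1`. -/
theorem dLap_tsum_eq_one (ε : ℝ) (hε : 0 < ε) (v : ℤ) :
    ∑' z : ℤ, ((Real.exp ε - 1) / (Real.exp ε + 1)) * Real.exp (-ε * ((|z - v| : ℤ) : ℝ))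
      = 1 := by
  have hr : Real.exp (-ε) < 1 := by rw [Real.exp_lt_one_iff]; linarith
  have hg := hasSum_geometric_of_lt_one (Real.exp_pos (-ε)).le hr
  have e1 : ∀ n : ℕ, Real.exp (-ε * ((|(n : ℤ)| : ℤ) : ℝ)) = Real.exp (-ε) ^ n := by
    intro n
    rw [← Real.exp_nat_mul, Nat.abs_cast]
    push_cast
    ring_nf
  have h1 : HasSum (fun n : ℕ => Real.exp (-ε * ((|(n : ℤ)| : ℤ) : ℝ)))
      (1 - Real.exp (-ε))⁻¹ := by
    simpa only [e1] using hg
  have h2 : HasSum (fun n : ℕ => Real.exp (-ε * ((|(-(n : ℤ))| : ℤ) : ℝ)))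
      (1 - Real.exp (-ε))⁻¹ := by
    simpa only [abs_neg] using h1
  have h := HasSum.of_nat_of_neg (f := fun z : ℤ => Real.exp (-ε * ((|z| : ℤ) : ℝ))) h1 h2
  have h3 := ((Equiv.subRight v).hasSum_iff.mpr h).mul_left
    ((Real.exp ε - 1) / (Real.exp ε + 1))
  refine h3.tsum_eq.trans ?_
  have hE : 1 < Real.exp ε := Real.one_lt_exp_iff.mpr hε
  have a1 : Real.exp ε - 1 ≠ 0 := by linarith
  have a2 : Real.exp ε + 1 ≠ 0 := by linarith
  have a3 : Real.exp ε ≠ 0 := by linarith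
  have a4 : (1 - Real.exp (-ε))⁻¹ = Real.exp ε / (Real.exp ε - 1) := by
    rw [Real.exp_neg]
    field_simp
  rw [a4]
  simp only [abs_zero, Int.cast_zero, mul_zero, Real.exp_zero]
  field_simp
  ring
end

section
/- (Tightness of the Laplace mechanism; the wrongly calibrated mechanism of Algorithm 1 is not ε-DP.) Let ε > 0 and v1, v2 ∈ ℤ with |v1 − v2| = r. Then there exists z ∈ ℤ such that dLap(v1, ε)(z) = exp(r·ε) · dLap(v2, ε)(z). Consequently, for a query q : D → ℤ and adjacent inputs d1 ∼ d2 with |q(d1) − q(d2)| = r, the mechanism M(d) = q(d) + ν with ν sampled from dLap(0, ε) satisfies: there is an output o ∈ ℤ with Pr[M(d1) = o] = exp(r·ε)·Pr[M(d2) = o]; hence for r > 1, M is not ε'-differentially private for any ε' < r·ε. -/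
open scoped BigOperators

noncomputable section

/-- The (wrongly calibrated) Laplace mechanism of Algorithm 1:
`M(d) = q(d) + ν` with `ν` sampled from `dLap(0, ε)`. -/
def Mech {D : Type*} (ε : ℝ) (q : D → ℤ) (d : D) : ℤ → ℝ :=
  pbind (dLap 0 ε) (fun ν => punit (q d + ν))

end

theorem dLap_tight_aux (ε : ℝ) (v1 v2 r : ℤ) (hv : |v1 - v2| = r) :
    dLap v1 ε v1 = Real.exp ((r : ℝ) * ε) * dLap v2 ε v1 := by
  unfold dLap
  rw [hv, mul_left_comm, ← Real.exp_add]
  congr 2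
  simp
  ring

theorem Mech_eq_aux {D : Type*} (ε : ℝ) (q : D → ℤ) (d : D) (o : ℤ) :
    Mech ε q d o = dLap (q d) ε o := by
  unfold Mech pbind punit
  rw [tsum_eq_single (o - q d)]
  · simp [dLap]
  · intro b hb
    have : o ≠ q d + b := by omega
    simp [this]

theorem dLap_pos_aux (ε : ℝ) (hε : 0 < ε) (v z : ℤ) : 0 < dLap v ε z := by
  unfold dLap
  have h : 1 < Real.exp ε := Real.one_lt_exp_iff.mpr hε
  have h1 : 0 < Real.exp ε - 1 := by linarith
  positivity

/-- Tightness of the Laplace mechanism: the wrongly calibrated mechanism of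
Algorithm 1 is not ε-DP. -/
theorem laplace_mechanism_tight {D : Type*} (ε : ℝ) (hε : 0 < ε)
    (v1 v2 r : ℤ) (hv : |v1 - v2| = r)
    (adj : D → D → Prop) (q : D → ℤ) (d1 d2 : D) (hadj : adj d1 d2)
    (hq : |q d1 - q d2| = r) :
    (∃ z : ℤ, dLap v1 ε z = Real.exp ((r : ℝ) * ε) * dLap v2 ε z) ∧
    (∃ o : ℤ, Mech ε q d1 o = Real.exp ((r : ℝ) * ε) * Mech ε q d2 o) ∧
    (1 < r → ∀ ε' : ℝ, ε' < (r : ℝ) * ε → ¬ DP ε' adj (Mech ε q)) := by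
  refine ⟨⟨v1, dLap_tight_aux ε v1 v2 r hv⟩, ⟨q d1, ?_⟩, ?_⟩
  · rw [Mech_eq_aux, Mech_eq_aux]
    exact dLap_tight_aux ε _ _ r hq
  · intro _ ε' hlt hDP
    have h := hDP d1 d2 hadj (q d1)
    rw [Mech_eq_aux, Mech_eq_aux, dLap_tight_aux ε _ _ r hq] at h
    have h2 := le_of_mul_le_mul_right h (dLap_pos_aux ε hε _ _)
    rw [Real.exp_le_exp] at h2
    linarith
end

section
/- (The above-threshold variant without query noise — Algorithm 3 — is not ε-DP for any ε.) Let ε > 0 and t ∈ ℤ, and for q1, q2 ∈ ℤ define the distribution M(q1, q2) on Bool × Bool by sampling T from dLap(t, ε/2) and outputting (decide(q1 ≥ T), decide(q2 ≥ T)). Then Pr[M(0, 1) = (false, true)] > 0 while Pr[M(1, 0) = (false, true)] = 0. Consequently, if q1, q2 : D → ℤ are queries and d1 ∼ d2 are adjacent inputs with q1(d1) = 0, q2(d1) = 1, q1(d2) = 1, q2(d2) = 0 (each query being 1-sensitive on this pair), the algorithm d ↦ M(q1(d), q2(d)) is not ε'-differentially private for any ε' ≥ 0. -/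
open scoped BigOperators

noncomputable section

/-- Algorithm 3 without query noise: sample a noisy threshold `T` from
`dLap(t, ε/2)` and output the pair of comparison outcomes
`(decide (q1 ≥ T), decide (q2 ≥ T))`. -/
def AboveThrNoNoise (t : ℤ) (ε : ℝ) (q1 q2 : ℤ) : Bool × Bool → ℝ :=
  pbind (dLap t (ε / 2)) (fun T => punit (decide (q1 ≥ T), decide (q2 ≥ T)))

end

/-- The above-threshold variant without query noise (Algorithm 3) is not ε-DP
for any ε. -/
theorem above_threshold_no_noise_not_dp {D : Type*} (ε : ℝ) (hε : 0 < ε) (t : ℤ)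
    (adj : D → D → Prop) (q1 q2 : D → ℤ) (d1 d2 : D) (hadj : adj d1 d2)
    (h11 : q1 d1 = 0) (h21 : q2 d1 = 1) (h12 : q1 d2 = 1) (h22 : q2 d2 = 0) :
    0 < AboveThrNoNoise t ε 0 1 (false, true) ∧
    AboveThrNoNoise t ε 1 0 (false, true) = 0 ∧
    (∀ ε' : ℝ, 0 ≤ ε' →
      ¬ DP ε' adj (fun d => AboveThrNoNoise t ε (q1 d) (q2 d))) := by
  have h1 : 0 < AboveThrNoNoise t ε 0 1 (false, true) := by
    have hsum : AboveThrNoNoise t ε 0 1 (false, true) = dLap t (ε / 2) 1 := by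
      unfold AboveThrNoNoise pbind
      rw [tsum_eq_single (1 : ℤ)]
      · simp [punit]
      · intro T hT
        have : ¬ ((0 : ℤ) < T ∧ T ≤ 1) := by omega
        simp only [punit, Prod.mk.injEq]
        rw [if_neg, mul_zero]
        rintro ⟨ha, hb⟩
        have ha' := of_decide_eq_false ha.symm
        have hb' := of_decide_eq_true hb.symm
        omega
    rw [hsum]
    unfold dLap
    have : 1 < Real.exp (ε / 2) := Real.one_lt_exp_iff.mpr (by linarith)
    have h3 : 0 < Real.exp (ε / 2) - 1 := by linarith
    positivity
  have h2 : AboveThrNoNoise t ε 1 0 (false, true) = 0 := by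
    unfold AboveThrNoNoise pbind
    rw [← tsum_zero (α := ℝ) (β := ℤ)]
    congr 1
    funext T
    simp only [punit, Prod.mk.injEq]
    rw [if_neg, mul_zero]
    rintro ⟨ha, hb⟩
    have ha' := of_decide_eq_false ha.symm
    have hb' := of_decide_eq_true hb.symm
    omega
  refine ⟨h1, h2, ?_⟩
  intro ε' _ h
  have h3 := h d1 d2 hadj (false, true)
  simp only [h11, h21, h12, h22, h2, mul_zero] at h3
  linarith
end
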